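/- The LF set of a canonical scenario is the convex hull of the finitely many behaviours indexed by pairs (c, l), where c is a tuple of friend outcomes and l an extreme point of the no-signalling polytope of the restricted scenario where no friend-having party uses input 1; in particular LF(S) is a convex polytope. -/

import Mathlib

open Finset MeasureTheory

section Framework

variable {I : Type} [Fintype I] [DecidableEq I]
  {M : I → Type} [∀ i, Fintype (M i)] [∀ i, DecidableEq (M i)]
  {O : I → Type} [∀ i, Fintype (O i)] [∀ i, DecidableEq (O i)]

/-- A behaviour: a family of probability distributions over joint outcomes, one per input tuple. -/
def IsBehaviour (p : (∀ i, M i) → (∀ i, O i) → ℝ) : Prop :=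
  (∀ x a, 0 ≤ p x a) ∧ ∀ x, ∑ a, p x a = 1

/-- No-signalling: the marginal over party `i`'s outcome does not depend on party `i`'s input. -/
def NoSignalling (p : (∀ i, M i) → (∀ i, O i) → ℝ) : Prop :=
  ∀ (x x' : ∀ i, M i) (i : I), (∀ j, j ≠ i → x j = x' j) →
    ∀ a : ∀ i, O i,
      ∑ b : O i, p x (Function.update a i b) = ∑ b : O i, p x' (Function.update a i b)

/-- Local hidden variable model (measure-theoretic form): a probability measure on a hidden
variable space together with local response distributions. -/
def IsLHV (p : (∀ i, M i) → (∀ i, O i) → ℝ) : Prop :=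
  ∃ (Λ : Type) (_ : MeasurableSpace Λ) (μ : Measure Λ),
    IsProbabilityMeasure μ ∧
    ∃ R : (i : I) → M i → Λ → O i → ℝ,
      (∀ i xi l a, 0 ≤ R i xi l a) ∧
      (∀ i xi l, ∑ a, R i xi l a = 1) ∧
      (∀ i xi a, Measurable (fun l => R i xi l a)) ∧
      ∀ x a, p x a = ∫ l, (∏ i, R i (x i) l (a i)) ∂μ

/-- Fully deterministic separable model with finitely many hidden variables. -/
def IsLHVFin (p : (∀ i, M i) → (∀ i, O i) → ℝ) : Prop :=
  ∃ (k : ℕ) (w : Fin k → ℝ) (α : (i : I) → M i → Fin k → O i),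
    (∀ l, 0 ≤ w l) ∧ (∑ l, w l = 1) ∧
    ∀ x a, p x a = ∑ l, w l * ∏ i, (if a i = α i (x i) l then (1 : ℝ) else 0)

/-- `J` is a joint probability distribution over all potential outcomes of all measurements of
all parties which reproduces the behaviour `p` by marginalization. -/
def IsJointFor (p : (∀ i, M i) → (∀ i, O i) → ℝ) (J : (∀ i, M i → O i) → ℝ) : Prop :=
  (∀ g, 0 ≤ J g) ∧ (∑ g, J g = 1) ∧
  ∀ x a, p x a = ∑ g ∈ Finset.univ.filter (fun g : ∀ i, M i → O i => ∀ i, g i (x i) = a i), J g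

/-- Local Agency: the marginal on any subset `V` of parties depends only on the inputs of `V`. -/
def LocalAgency (q : (∀ i, M i) → (∀ i, O i) → ℝ) : Prop :=
  ∀ (V : Finset I) (x x' : ∀ i, M i), (∀ i ∈ V, x i = x' i) →
    ∀ a : ∀ i, O i,
      ∑ b ∈ Finset.univ.filter (fun b : ∀ i, O i => ∀ i ∈ V, b i = a i), q x b
        = ∑ b ∈ Finset.univ.filter (fun b : ∀ i, O i => ∀ i ∈ V, b i = a i), q x' b

/-- Local Friendliness decomposition for friend set `F`, where `one i` is the distinguished
(query) input of party `i`. -/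
def IsLF (F : Finset I) (one : ∀ i, M i)
    (p : (∀ i, M i) → (∀ i, O i) → ℝ) : Prop :=
  ∃ (P : (∀ i : {j // j ∈ F}, O i.1) → ℝ)
    (Q : (∀ i : {j // j ∈ F}, O i.1) → (∀ i, M i) → (∀ i, O i) → ℝ),
    (∀ c, 0 ≤ P c) ∧ (∑ c, P c = 1) ∧
    (∀ c x a, 0 ≤ Q c x a) ∧ (∀ c x, ∑ a, Q c x a = 1) ∧
    (∀ c, LocalAgency (Q c)) ∧
    (∀ c x a, (∃ i : {j // j ∈ F}, x i.1 = one i.1 ∧ a i.1 ≠ c i) → Q c x a = 0) ∧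
    ∀ x a, p x a = ∑ c, P c * Q c x a

end Framework

/-- No-signalling behaviours of the public scenario restricted to input tuples in which no
party with a friend (`i ∈ F`) selects the distinguished query input `one i`. -/
def NSRes {I : Type} [Fintype I] [DecidableEq I]
    {M : I → Type} [∀ i, Fintype (M i)] [∀ i, DecidableEq (M i)]
    {O : I → Type} [∀ i, Fintype (O i)] [∀ i, DecidableEq (O i)]
    (F : Finset I) (one : ∀ i, M i)
    (q : {x : ∀ i, M i // ∀ i ∈ F, x i ≠ one i} → (∀ i, O i) → ℝ) : Prop :=
  (∀ x a, 0 ≤ q x a) ∧ (∀ x, ∑ a, q x a = 1) ∧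
  ∀ (x x' : {x : ∀ i, M i // ∀ i ∈ F, x i ≠ one i}) (i : I),
    (∀ j, j ≠ i → x.1 j = x'.1 j) →
    ∀ a : ∀ i, O i,
      ∑ b : O i, q x (Function.update a i b) = ∑ b : O i, q x' (Function.update a i b)

/-- Replace each query input of a friend-having party by the alternative input `alt i`. -/
def extendInput {I : Type} [DecidableEq I] {M : I → Type} [∀ i, DecidableEq (M i)]
    (F : Finset I) (one alt : ∀ i, M i) (x : ∀ i, M i) : ∀ i, M i :=
  fun i => if i ∈ F ∧ x i = one i then alt i else x i

theorem extendInput_avoids {I : Type} [DecidableEq I] {M : I → Type}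
    [∀ i, DecidableEq (M i)] (F : Finset I) (one alt : ∀ i, M i)
    (halt : ∀ i, alt i ≠ one i) (x : ∀ i, M i) :
    ∀ i ∈ F, extendInput F one alt x i ≠ one i := by
  intro i hi
  show (if i ∈ F ∧ x i = one i then alt i else x i) ≠ one i
  by_cases h : i ∈ F ∧ x i = one i
  · rw [if_pos h]; exact halt i
  · rw [if_neg h]; exact fun hxi => h ⟨hi, hxi⟩

section Helpers

set_option linter.unusedSectionVars false

variable {I : Type} [Fintype I] [DecidableEq I]
  {M : I → Type} [∀ i, Fintype (M i)] [∀ i, DecidableEq (M i)]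
  {O : I → Type} [∀ i, Fintype (O i)] [∀ i, DecidableEq (O i)]

theorem aux_sum_update (f : (∀ i, O i) → ℝ) (i : I) :
    ∑ b : ∀ i, O i, ∑ o : O i, f (Function.update b i o)
      = (Fintype.card (O i) : ℝ) * ∑ b, f b := by
  have h1 : ∑ z : (∀ i, O i) × O i, f (Function.update z.1 i z.2)
      = ∑ z : (∀ i, O i) × O i, f z.1 := by
    refine Finset.sum_nbij' (fun z => (Function.update z.1 i z.2, z.1 i))
      (fun z => (Function.update z.1 i z.2, z.1 i)) ?_ ?_ ?_ ?_ ?_ <;> simp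
  rw [Fintype.sum_prod_type, Fintype.sum_prod_type] at h1
  rw [h1]
  simp [Finset.mul_sum]

theorem aux_sum_erase (f : (∀ i, O i) → ℝ) (i : I) (a : ∀ i, O i) :
    ∑ b ∈ Finset.univ.filter (fun b : ∀ i, O i => ∀ j ∈ Finset.univ.erase i, b j = a j), f b
      = ∑ o : O i, f (Function.update a i o) := by
  symm
  refine Finset.sum_nbij' (fun o => Function.update a i o) (fun b => b i) ?_ ?_ ?_ ?_ ?_
  · intro o _
    simp only [Finset.mem_filter, Finset.mem_univ, true_and, Finset.mem_erase]
    intro j hj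
    exact Function.update_of_ne hj.1 _ _
  · simp
  · simp
  · intro b hb
    simp only [Finset.mem_filter, Finset.mem_univ, true_and, Finset.mem_erase] at hb
    funext j
    by_cases h : j = i
    · subst h; simp
    · rw [Function.update_of_ne h]; exact (hb j ⟨h, trivial⟩).symm
  · simp

theorem aux_ns_step (F : Finset I) (one : ∀ i, M i)
    (q : {x : ∀ i, M i // ∀ i ∈ F, x i ≠ one i} → (∀ i, O i) → ℝ) (hq : NSRes F one q)
    (x x' : {x : ∀ i, M i // ∀ i ∈ F, x i ≠ one i}) (i : I)
    (h : ∀ j, j ≠ i → x.1 j = x'.1 j) (V : Finset I) (hV : i ∉ V) (a : ∀ i, O i) :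
    ∑ b ∈ Finset.univ.filter (fun b : ∀ i, O i => ∀ i ∈ V, b i = a i), q x b
      = ∑ b ∈ Finset.univ.filter (fun b : ∀ i, O i => ∀ i ∈ V, b i = a i), q x' b := by
  have key : ∀ (b : ∀ i, O i) (o : O i),
      (∀ j ∈ V, Function.update b i o j = a j) ↔ (∀ j ∈ V, b j = a j) := by
    intro b o
    refine forall₂_congr fun j hj => ?_
    rw [Function.update_of_ne (ne_of_mem_of_not_mem hj hV)]
  have hc : (Fintype.card (O i) : ℝ) ≠ 0 := by
    have : Nonempty (O i) := ⟨a i⟩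
    exact_mod_cast Fintype.card_ne_zero
  rw [Finset.sum_filter, Finset.sum_filter]
  apply mul_left_cancel₀ hc
  rw [← aux_sum_update _ i, ← aux_sum_update _ i]
  refine Finset.sum_congr rfl fun b _ => ?_
  simp only [key]
  split_ifs with hb
  · exact hq.2.2 x x' i h b
  · rfl

theorem aux_ns_la (F : Finset I) (one : ∀ i, M i)
    (q : {x : ∀ i, M i // ∀ i ∈ F, x i ≠ one i} → (∀ i, O i) → ℝ) (hq : NSRes F one q)
    (V : Finset I) (a : ∀ i, O i) (x : {x : ∀ i, M i // ∀ i ∈ F, x i ≠ one i})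
    (D : Finset I) : Disjoint D V →
    ∀ (x' : {x : ∀ i, M i // ∀ i ∈ F, x i ≠ one i}),
    (∀ j, j ∉ D → x.1 j = x'.1 j) →
    ∑ b ∈ Finset.univ.filter (fun b : ∀ i, O i => ∀ i ∈ V, b i = a i), q x b
      = ∑ b ∈ Finset.univ.filter (fun b : ∀ i, O i => ∀ i ∈ V, b i = a i), q x' b := by
  induction D using Finset.induction_on with
  | empty =>
    intro _ x' h
    have : x = x' := Subtype.ext (funext fun j => h j (Finset.notMem_empty j))
    rw [this]
  | insert i D hi ih =>
    intro hD x' h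
    rw [Finset.disjoint_insert_left] at hD
    have hy : ∀ j ∈ F, Function.update x'.1 i (x.1 i) j ≠ one j := by
      intro j hj
      by_cases e : j = i
      · subst e; simpa using x.2 j hj
      · rw [Function.update_of_ne e]; exact x'.2 j hj
    rw [ih hD.2 ⟨_, hy⟩, aux_ns_step F one q hq ⟨_, hy⟩ x' i _ V hD.1 a]
    · intro j hj
      exact Function.update_of_ne hj _ _
    · intro j hj
      by_cases e : j = i
      · subst e; simp
      · show _ = Function.update x'.1 i (x.1 i) j
        rw [Function.update_of_ne e]; exact h j (by simp [e, hj])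

/-- The linear map sending a restricted behaviour to the vertex-type behaviour. -/
def auxPhi (F : Finset I) (one alt : ∀ i, M i) (halt : ∀ i, alt i ≠ one i)
    (c : ∀ i : {j // j ∈ F}, O i.1) :
    ({x : ∀ i, M i // ∀ i ∈ F, x i ≠ one i} → (∀ i, O i) → ℝ) →ₗ[ℝ]
      ((∀ i, M i) → (∀ i, O i) → ℝ) where
  toFun q := fun x a =>
    (∏ i : {j // j ∈ F}, if x i.1 = one i.1 ∧ a i.1 ≠ c i then (0 : ℝ) else 1) *
      ∑ b ∈ Finset.univ.filter
        (fun b : ∀ i, O i => ∀ i, ¬(i ∈ F ∧ x i = one i) → b i = a i),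
        q ⟨extendInput F one alt x, extendInput_avoids F one alt halt x⟩ b
  map_add' q q' := by
    funext x a
    simp [Finset.sum_add_distrib, mul_add]
  map_smul' r q := by
    funext x a
    simp only [Pi.smul_apply, smul_eq_mul, RingHom.id_apply, ← Finset.mul_sum]
    ring

/-- Conditional behaviours allowed for the friend outcome tuple `c`. -/
def auxK (F : Finset I) (one : ∀ i, M i) (c : ∀ i : {j // j ∈ F}, O i.1) :
    Set ((∀ i, M i) → (∀ i, O i) → ℝ) :=
  {Q | (∀ x a, 0 ≤ Q x a) ∧ (∀ x, ∑ a, Q x a = 1) ∧ LocalAgency Q ∧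
    (∀ x a, (∃ i : {j // j ∈ F}, x i.1 = one i.1 ∧ a i.1 ≠ c i) → Q x a = 0)}

theorem auxK_convex (F : Finset I) (one : ∀ i, M i) (c : ∀ i : {j // j ∈ F}, O i.1) :
    Convex ℝ (auxK F one c) := by
  rintro Q ⟨h1, h2, h3, h4⟩ Q' ⟨h1', h2', h3', h4'⟩ s t hs ht hst
  refine ⟨fun x a => ?_, fun x => ?_, fun V x x' h a => ?_, fun x a h => ?_⟩
  · have := h1 x a
    have := h1' x a
    simp only [Pi.add_apply, Pi.smul_apply, smul_eq_mul]
    positivity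
  · simp only [Pi.add_apply, Pi.smul_apply, smul_eq_mul, Finset.sum_add_distrib,
      ← Finset.mul_sum, h2, h2', mul_one, hst]
  · simp only [Pi.add_apply, Pi.smul_apply, smul_eq_mul, Finset.sum_add_distrib,
      ← Finset.mul_sum, h3 V x x' h a, h3' V x x' h a]
  · simp [h4 x a h, h4' x a h]

theorem aux_prod (F : Finset I) (one : ∀ i, M i) (c : ∀ i : {j // j ∈ F}, O i.1)
    (x : ∀ i, M i) (a : ∀ i, O i) :
    (∏ i : {j // j ∈ F}, if x i.1 = one i.1 ∧ a i.1 ≠ c i then (0 : ℝ) else 1)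
      = if (∀ i : {j // j ∈ F}, x i.1 = one i.1 → a i.1 = c i) then 1 else 0 := by
  split_ifs with h
  · refine Finset.prod_eq_one fun i _ => if_neg ?_
    rintro ⟨h1, h2⟩
    exact h2 (h i h1)
  · push Not at h
    obtain ⟨i, hi⟩ := h
    exact Finset.prod_eq_zero (Finset.mem_univ i) (if_pos hi)

theorem aux_marg (F : Finset I) (one alt : ∀ i, M i) (halt : ∀ i, alt i ≠ one i)
    (c : ∀ i : {j // j ∈ F}, O i.1)
    (q : {x : ∀ i, M i // ∀ i ∈ F, x i ≠ one i} → (∀ i, O i) → ℝ)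
    (V : Finset I) (x : ∀ i, M i) (a : ∀ i, O i) :
    ∑ b ∈ Finset.univ.filter (fun b : ∀ i, O i => ∀ i ∈ V, b i = a i),
        auxPhi F one alt halt c q x b
      = (if (∀ i : {j // j ∈ F}, i.1 ∈ V → x i.1 = one i.1 → a i.1 = c i) then 1 else 0) *
        ∑ b ∈ Finset.univ.filter (fun b : ∀ i, O i =>
            ∀ i ∈ V.filter (fun i => ¬(i ∈ F ∧ x i = one i)), b i = a i),
          q ⟨extendInput F one alt x, extendInput_avoids F one alt halt x⟩ b := by
  simp only [auxPhi, LinearMap.coe_mk, AddHom.coe_mk, aux_prod]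
  generalize q ⟨extendInput F one alt x, extendInput_avoids F one alt halt x⟩ = f
  simp only [Finset.sum_filter, Finset.mul_sum]
  rw [← Finset.sum_filter, Finset.sum_comm]
  refine Finset.sum_congr rfl fun b' _ => ?_
  rw [Finset.sum_filter]
  let b0 : ∀ i, O i := fun i => if h : i ∈ F ∧ x i = one i then c ⟨i, h.1⟩ else b' i
  have hb0 : ∀ i (h : i ∈ F ∧ x i = one i), b0 i = c ⟨i, h.1⟩ := fun i h => dif_pos h
  have hb0' : ∀ i, ¬ (i ∈ F ∧ x i = one i) → b0 i = b' i := fun i h => dif_neg h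
  rw [Finset.sum_eq_single b0]
  · have e1 : (∀ i : {j // j ∈ F}, x i.1 = one i.1 → b0 i.1 = c i) :=
      fun i h => hb0 i.1 ⟨i.2, h⟩
    have e2 : ∀ i, ¬ (i ∈ F ∧ x i = one i) → b' i = b0 i := fun i h => (hb0' i h).symm
    rw [if_pos e1, if_pos e2]
    by_cases h : ∀ i ∈ V, b0 i = a i
    · rw [if_pos h, if_pos, if_pos]
      · intro i hi
        rw [Finset.mem_filter] at hi
        rw [← h i hi.1, hb0' i hi.2]
      · intro i hi hx
        rw [← h i hi, hb0 i ⟨i.2, hx⟩]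
    · rw [if_neg h]
      symm
      by_contra hne
      apply h
      have g1 : (∀ i : {j // j ∈ F}, i.1 ∈ V → x i.1 = one i.1 → a i.1 = c i) := by
        by_contra g; rw [if_neg g] at hne; simp at hne
      have g2 : ∀ i ∈ V.filter (fun i => ¬(i ∈ F ∧ x i = one i)), b' i = a i := by
        by_contra g; rw [if_neg g] at hne; simp at hne
      intro i hi
      by_cases hx : i ∈ F ∧ x i = one i
      · rw [hb0 i hx]; exact (g1 ⟨i, hx.1⟩ hi hx.2).symm
      · rw [hb0' i hx]; exact g2 i (Finset.mem_filter.2 ⟨hi, hx⟩)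
  · intro b _ hb
    by_contra hne
    apply hb
    have g1 : (∀ i : {j // j ∈ F}, x i.1 = one i.1 → b i.1 = c i) := by
      by_contra g; rw [if_neg g] at hne; simp at hne
    have g2 : ∀ i, ¬ (i ∈ F ∧ x i = one i) → b' i = b i := by
      by_contra g; rw [if_neg g] at hne; simp at hne
    funext i
    by_cases hx : i ∈ F ∧ x i = one i
    · rw [hb0 i hx]; exact g1 ⟨i, hx.1⟩ hx.2
    · rw [hb0' i hx]; exact (g2 i hx).symm
  · simp

theorem auxPhi_mem (F : Finset I) (one alt : ∀ i, M i) (halt : ∀ i, alt i ≠ one i)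
    (c : ∀ i : {j // j ∈ F}, O i.1)
    (q : {x : ∀ i, M i // ∀ i ∈ F, x i ≠ one i} → (∀ i, O i) → ℝ) (hq : NSRes F one q) :
    auxPhi F one alt halt c q ∈ auxK F one c := by
  refine ⟨fun x a => ?_, fun x => ?_, fun V x x' h a => ?_, fun x a h => ?_⟩
  · simp only [auxPhi, LinearMap.coe_mk, AddHom.coe_mk, aux_prod]
    refine mul_nonneg (by split_ifs <;> norm_num) (Finset.sum_nonneg fun b _ => hq.1 _ _)
  · have hne : Nonempty (∀ i, O i) := by
      by_contra hn
      rw [not_nonempty_iff] at hn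
      have := hq.2.1 ⟨extendInput F one alt x, extendInput_avoids F one alt halt x⟩
      simp at this
    obtain ⟨a⟩ := hne
    have := aux_marg F one alt halt c q ∅ x a
    simpa [hq.2.1] using this
  · rw [aux_marg, aux_marg]
    have e1 : (∀ i : {j // j ∈ F}, i.1 ∈ V → x i.1 = one i.1 → a i.1 = c i) ↔
        (∀ i : {j // j ∈ F}, i.1 ∈ V → x' i.1 = one i.1 → a i.1 = c i) := by
      refine forall₂_congr fun i hi => ?_
      rw [h i hi]
    have e2 : V.filter (fun i => ¬(i ∈ F ∧ x i = one i))
        = V.filter (fun i => ¬(i ∈ F ∧ x' i = one i)) := by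
      refine Finset.filter_congr fun i hi => ?_
      rw [h i hi]
    rw [e2]
    simp only [e1]
    congr 1
    refine aux_ns_la F one q hq _ a _ (Finset.univ \ V) ?_ _ ?_
    · rw [Finset.disjoint_left]
      intro i hi hi'
      exact (Finset.mem_sdiff.1 hi).2 (Finset.mem_filter.1 hi').1
    · intro j hj
      have hj : j ∈ V := by simpa using hj
      simp only [extendInput, h j hj]
  · obtain ⟨i, hi⟩ := h
    simp only [auxPhi, LinearMap.coe_mk, AddHom.coe_mk]
    rw [aux_prod, if_neg, zero_mul]
    exact fun hh => hi.2 (hh i hi.1)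

theorem aux_restrict (F : Finset I) (one : ∀ i, M i)
    (c : ∀ i : {j // j ∈ F}, O i.1) (Q : (∀ i, M i) → (∀ i, O i) → ℝ)
    (hQ : Q ∈ auxK F one c) : NSRes F one (fun x a => Q x.1 a) := by
  refine ⟨fun x a => hQ.1 _ _, fun x => hQ.2.1 _, fun x x' i h a => ?_⟩
  rw [← aux_sum_erase (Q x.1), ← aux_sum_erase (Q x'.1)]
  exact hQ.2.2.1 _ _ _ (fun j hj => h j (Finset.mem_erase.1 hj).1) a

theorem aux_eq_phi (F : Finset I) (one alt : ∀ i, M i) (halt : ∀ i, alt i ≠ one i)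
    (c : ∀ i : {j // j ∈ F}, O i.1) (Q : (∀ i, M i) → (∀ i, O i) → ℝ)
    (hQ : Q ∈ auxK F one c) : auxPhi F one alt halt c (fun x a => Q x.1 a) = Q := by
  funext x a
  simp only [auxPhi, LinearMap.coe_mk, AddHom.coe_mk, aux_prod]
  split_ifs with h
  · rw [one_mul]
    have hf : ∀ b : ∀ i, O i, (∀ i, ¬(i ∈ F ∧ x i = one i) → b i = a i) ↔
        ∀ i ∈ Finset.univ.filter (fun i => ¬(i ∈ F ∧ x i = one i)), b i = a i := by
      intro b; simp
    simp only [hf]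
    rw [hQ.2.2.1 _ _ x _ a, Finset.sum_eq_single a]
    · intro b hb hne
      apply hQ.2.2.2
      by_contra hcon
      push Not at hcon
      apply hne
      funext i
      by_cases hx : i ∈ F ∧ x i = one i
      · rw [hcon ⟨i, hx.1⟩ hx.2, h ⟨i, hx.1⟩ hx.2]
      · exact (Finset.mem_filter.1 hb).2 i (by simpa using hx)
    · intro hn
      exact absurd (by simp) hn
    · intro i hi
      exact if_neg (Finset.mem_filter.1 hi).2
  · rw [zero_mul]
    push Not at h
    exact (hQ.2.2.2 x a h).symm

theorem aux_ns_convex (F : Finset I) (one : ∀ i, M i) :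
    Convex ℝ {q : {x : ∀ i, M i // ∀ i ∈ F, x i ≠ one i} → (∀ i, O i) → ℝ |
      NSRes F one q} := by
  rintro Q ⟨h1, h2, h3⟩ Q' ⟨h1', h2', h3'⟩ s t hs ht hst
  refine ⟨fun x a => ?_, fun x => ?_, fun x x' i h a => ?_⟩
  · have := h1 x a
    have := h1' x a
    simp only [Pi.add_apply, Pi.smul_apply, smul_eq_mul]
    positivity
  · simp only [Pi.add_apply, Pi.smul_apply, smul_eq_mul, Finset.sum_add_distrib,
      ← Finset.mul_sum, h2, h2', mul_one, hst]
  · simp only [Pi.add_apply, Pi.smul_apply, smul_eq_mul, Finset.sum_add_distrib,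
      ← Finset.mul_sum, h3 x x' i h a, h3' x x' i h a]

theorem aux_ns_compact (F : Finset I) (one : ∀ i, M i) :
    IsCompact {q : {x : ∀ i, M i // ∀ i ∈ F, x i ≠ one i} → (∀ i, O i) → ℝ |
      NSRes F one q} := by
  refine IsCompact.of_isClosed_subset
    (s := Set.pi Set.univ fun _ => Set.pi Set.univ fun _ => Set.Icc (0 : ℝ) 1) ?_ ?_ ?_
  · exact isCompact_univ_pi fun _ => isCompact_univ_pi fun _ => isCompact_Icc
  · simp only [NSRes, Set.ofPred_and, Set.ofPred_forall]
    refine IsClosed.inter ?_ (IsClosed.inter ?_ ?_)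
    · exact isClosed_iInter fun x => isClosed_iInter fun a =>
        isClosed_le (by fun_prop) (by fun_prop)
    · exact isClosed_iInter fun x => isClosed_eq (by fun_prop) (by fun_prop)
    · exact isClosed_iInter fun x => isClosed_iInter fun x' => isClosed_iInter fun i =>
        isClosed_iInter fun h => isClosed_iInter fun a =>
        isClosed_eq (by fun_prop) (by fun_prop)
  · intro q hq x _ a _
    refine ⟨hq.1 x a, ?_⟩
    rw [← hq.2.1 x]
    exact Finset.single_le_sum (fun b _ => hq.1 x b) (Finset.mem_univ a)

theorem aux_extreme_unique (F : Finset I) (one : ∀ i, M i)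
    (q q' : {x : ∀ i, M i // ∀ i ∈ F, x i ≠ one i} → (∀ i, O i) → ℝ)
    (hq : q ∈ Set.extremePoints ℝ {q | NSRes F one q}) (hq' : NSRes F one q')
    (hz : ∀ x a, q x a = 0 → q' x a = 0) : q' = q := by
  have hqn : NSRes F one q := hq.1
  have hev : ∀ᶠ ε : ℝ in nhdsWithin 0 (Set.Ioi 0), ∀ x a, ε * q' x a ≤ q x a := by
    rw [Filter.eventually_all]
    intro x
    rw [Filter.eventually_all]
    intro a
    rcases (hqn.1 x a).eq_or_lt with h | h
    · simp [hz x a h.symm, ← h]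
    · have : Filter.Tendsto (fun ε : ℝ => ε * q' x a) (nhdsWithin 0 (Set.Ioi 0)) (nhds 0) := by
        have : Filter.Tendsto (fun ε : ℝ => ε * q' x a) (nhds 0) (nhds (0 * q' x a)) :=
          (continuous_id.mul continuous_const).tendsto 0
        rw [zero_mul] at this
        exact this.mono_left nhdsWithin_le_nhds
      filter_upwards [this.eventually (gt_mem_nhds h)] with ε he using he.le
  have hlt : ∀ᶠ ε : ℝ in nhdsWithin 0 (Set.Ioi 0), ε ∈ Set.Ioo (0 : ℝ) 1 :=
    Ioo_mem_nhdsGT one_pos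
  obtain ⟨ε, h1, h0, h2⟩ := (hev.and hlt).exists
  have hp : 0 < 1 - ε := by linarith
  let r : {x : ∀ i, M i // ∀ i ∈ F, x i ≠ one i} → (∀ i, O i) → ℝ :=
    fun x a => (1 - ε)⁻¹ * (q x a - ε * q' x a)
  have hr : NSRes F one r := by
    refine ⟨fun x a => ?_, fun x => ?_, fun x x' i h a => ?_⟩
    · exact mul_nonneg (inv_nonneg.2 hp.le) (sub_nonneg.2 (h1 x a))
    · simp only [r, ← Finset.mul_sum, Finset.sum_sub_distrib, hqn.2.1, hq'.2.1, mul_one]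
      exact inv_mul_cancel₀ hp.ne'
    · simp only [r, ← Finset.mul_sum, Finset.sum_sub_distrib, hqn.2.2 x x' i h a,
        hq'.2.2 x x' i h a]
  refine hq.2 hq' hr ⟨ε, 1 - ε, h0, hp, by ring, ?_⟩
  funext x a
  simp only [Pi.add_apply, Pi.smul_apply, smul_eq_mul, r]
  rw [mul_inv_cancel_left₀ hp.ne']
  ring

theorem aux_ns_hull (F : Finset I) (one : ∀ i, M i) :
    convexHull ℝ (Set.extremePoints ℝ
      {q : {x : ∀ i, M i // ∀ i ∈ F, x i ≠ one i} → (∀ i, O i) → ℝ | NSRes F one q})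
      = {q | NSRes F one q} := by
  have hfin : (Set.extremePoints ℝ
      {q : {x : ∀ i, M i // ∀ i ∈ F, x i ≠ one i} → (∀ i, O i) → ℝ |
        NSRes F one q}).Finite := by
    refine Set.Finite.of_injOn
      (f := fun q => {z : {x : ∀ i, M i // ∀ i ∈ F, x i ≠ one i} × (∀ i, O i) |
        q z.1 z.2 = 0}) (t := Set.univ) (fun _ _ => trivial) ?_ Set.finite_univ
    intro q hq q' hq' h
    refine (aux_extreme_unique F one q q' hq hq'.1 fun x a hx => ?_).symm
    have : (x, a) ∈ {z : {x : ∀ i, M i // ∀ i ∈ F, x i ≠ one i} × (∀ i, O i) |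
        q z.1 z.2 = 0} := hx
    simp only at h
    rw [h] at this
    exact this
  have h := closure_convexHull_extremePoints (aux_ns_compact (O := O) F one)
    (aux_ns_convex F one)
  rwa [(hfin.isClosed_convexHull ℝ).closure_eq] at h

open scoped Pointwise in
theorem aux_lf_convex (F : Finset I) (one : ∀ i, M i) :
    Convex ℝ {p : (∀ i, M i) → (∀ i, O i) → ℝ | IsLF F one p} := by
  rintro p ⟨P, Q, h1, h2, h3, h4, h5, h6, h7⟩ p' ⟨P', Q', h1', h2', h3', h4', h5', h6', h7'⟩
    s t hs ht hst
  have hQ : ∀ c, Q c ∈ auxK F one c := fun c => ⟨h3 c, h4 c, h5 c, h6 c⟩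
  have hQ' : ∀ c, Q' c ∈ auxK F one c := fun c => ⟨h3' c, h4' c, h5' c, h6' c⟩
  have hex : ∀ c, ∃ R ∈ auxK F one c,
      (s * P c + t * P' c) • R = (s * P c) • Q c + (t * P' c) • Q' c := by
    intro c
    have hm : (s * P c) • Q c + (t * P' c) • Q' c ∈
        (s * P c + t * P' c) • auxK F one c := by
      rw [(auxK_convex F one c).add_smul (mul_nonneg hs (h1 c)) (mul_nonneg ht (h1' c))]
      exact Set.add_mem_add (Set.smul_mem_smul_set (hQ c)) (Set.smul_mem_smul_set (hQ' c))
    obtain ⟨R, hR, e⟩ := hm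
    exact ⟨R, hR, e⟩
  choose R hR e using hex
  refine ⟨fun c => s * P c + t * P' c, R, fun c => ?_, ?_, fun c => (hR c).1,
    fun c => (hR c).2.1, fun c => (hR c).2.2.1, fun c => (hR c).2.2.2, fun x a => ?_⟩
  · exact add_nonneg (mul_nonneg hs (h1 c)) (mul_nonneg ht (h1' c))
  · rw [Finset.sum_add_distrib, ← Finset.mul_sum, ← Finset.mul_sum, h2, h2', mul_one, mul_one,
      hst]
  · have he : ∀ c, (s * P c + t * P' c) * R c x a
        = s * (P c * Q c x a) + t * (P' c * Q' c x a) := by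
      intro c
      have := congrFun (congrFun (e c) x) a
      simp only [Pi.add_apply, Pi.smul_apply, smul_eq_mul] at this
      rw [this]; ring
    simp only [he, Finset.sum_add_distrib, ← Finset.mul_sum, Pi.add_apply, Pi.smul_apply,
      smul_eq_mul, h7, h7']

end Helpers

/-- the LF set is the convex hull of the finitely many behaviours indexed by
pairs `(c, q)` of a friend-outcome tuple `c` and an extreme point `q` of the no-signalling
polytope of the restricted scenario where no friend-having party uses the query input;
each such behaviour is the product of Kronecker deltas on the queried friends' outcomes with
the appropriate marginal of `q`. In particular the LF set is a convex polytope. -/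
theorem lf_convexHull_vertices {I : Type} [Fintype I] [DecidableEq I]
    {M : I → Type} [∀ i, Fintype (M i)] [∀ i, DecidableEq (M i)]
    {O : I → Type} [∀ i, Fintype (O i)] [∀ i, DecidableEq (O i)]
    (F : Finset I) (one alt : ∀ i, M i) (halt : ∀ i, alt i ≠ one i) :
    {p : (∀ i, M i) → (∀ i, O i) → ℝ | IsLF F one p} =
      convexHull ℝ {p : (∀ i, M i) → (∀ i, O i) → ℝ |
        ∃ (c : ∀ i : {j // j ∈ F}, O i.1)
          (q : {x : ∀ i, M i // ∀ i ∈ F, x i ≠ one i} → (∀ i, O i) → ℝ),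
          q ∈ Set.extremePoints ℝ
            {q' : {x : ∀ i, M i // ∀ i ∈ F, x i ≠ one i} → (∀ i, O i) → ℝ |
              NSRes F one q'} ∧
          ∀ x a, p x a =
            (∏ i : {j // j ∈ F},
              if x i.1 = one i.1 ∧ a i.1 ≠ c i then (0 : ℝ) else 1) *
            ∑ b ∈ Finset.univ.filter
                (fun b : ∀ i, O i => ∀ i, ¬(i ∈ F ∧ x i = one i) → b i = a i),
              q ⟨extendInput F one alt x, extendInput_avoids F one alt halt x⟩ b} := by
  apply Set.Subset.antisymm
  · rintro p ⟨P, Q, h1, h2, h3, h4, h5, h6, h7⟩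
    have hp : p = ∑ c, P c • Q c := by
      funext x a
      rw [h7]
      simp [Finset.sum_apply]
    rw [hp]
    refine (convex_convexHull ℝ _).sum_mem (fun c _ => h1 c) h2 (fun c _ => ?_)
    have hQ : Q c ∈ auxK F one c := ⟨h3 c, h4 c, h5 c, h6 c⟩
    rw [← aux_eq_phi F one alt halt c (Q c) hQ]
    have hm : (fun (x : {x : ∀ i, M i // ∀ i ∈ F, x i ≠ one i}) a => Q c x.1 a) ∈
        {q | NSRes F one q} := aux_restrict F one c (Q c) hQ
    rw [← aux_ns_hull] at hm
    have hi := Set.mem_image_of_mem (auxPhi F one alt halt c) hm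
    rw [LinearMap.image_convexHull] at hi
    refine convexHull_mono ?_ hi
    rintro _ ⟨q, hq, rfl⟩
    exact ⟨c, q, hq, fun x a => rfl⟩
  · refine convexHull_min ?_ (aux_lf_convex F one)
    rintro p ⟨c, q, hq, hp⟩
    have hK := fun c' => auxPhi_mem F one alt halt c' q hq.1
    refine ⟨fun c' => if c' = c then 1 else 0, fun c' => auxPhi F one alt halt c' q,
      fun c' => by dsimp only; split_ifs <;> norm_num, by simp, fun c' => (hK c').1,
      fun c' => (hK c').2.1, fun c' => (hK c').2.2.1, fun c' => (hK c').2.2.2, fun x a => ?_⟩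
    rw [hp x a]
    simp [auxPhi]
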